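/- Suppose each ψ_k is 1-Lipschitz and S_N = {z_1,…,z_N} ⊆ X is an ε-net of X (every x ∈ X is within distance ε of some z_j). Then the discretized relaxed problem is sandwiched between the original problem at radii η and η + ε: sup_{P_0 ∈ 𝒫_0^η, P_1 ∈ 𝒫_1^η} (1 − TV(P_0, P_1)) ≤ sup_{P_0 ∈ 𝒫^{η+ε}_{0,N}, P_1 ∈ 𝒫^{η+ε}_{1,N}} (1 − TV(P_0, P_1)) ≤ sup_{P_0 ∈ 𝒫_0^{η+ε}, P_1 ∈ 𝒫_1^{η+ε}} (1 − TV(P_0, P_1)). -/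

import Mathlib

open MeasureTheory

/-- The total variation distance between two measures:
`TV(P, Q) = sup over measurable sets A of |P(A) − Q(A)|`. -/
noncomputable def tv {Ω : Type*} [MeasurableSpace Ω] (P Q : Measure Ω) : ℝ :=
  ⨆ A : {A : Set Ω // MeasurableSet A}, |(P A.1).toReal - (Q A.1).toReal|

/-- The moment-constrained uncertainty set around nominal `Qhat` with radius `θ`. -/
def momentSet {d : ℕ} (X : Set (EuclideanSpace ℝ (Fin d))) {K : ℕ}
    (ψ : Fin K → X → ℝ) (Qhat : ProbabilityMeasure X) (θ : ℝ) :
    Set (ProbabilityMeasure X) :=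
  {P | ∀ k, |∫ x, ψ k x ∂(P : Measure X) - ∫ x, ψ k x ∂(Qhat : Measure X)| ≤ θ}

/-- The relaxed discretized uncertainty set: members of the moment-constrained set of
radius `η + ε` that are supported on the finite set `{z_1,…,z_N}`. -/
def momentSetDiscrete {d : ℕ} (X : Set (EuclideanSpace ℝ (Fin d))) {K : ℕ}
    (ψ : Fin K → X → ℝ) (Qhat : ProbabilityMeasure X) (θ : ℝ)
    {N : ℕ} (z : Fin N → X) : Set (ProbabilityMeasure X) :=
  {P | (P : Measure X) (Set.range z)ᶜ = 0 ∧ P ∈ momentSet X ψ Qhat θ}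

/-!
Since `S` is a countable net, every point can be moved measurably to a point of `S` so that no
moment function changes by more than `δ`. Pushing measures forward along this map puts them on `S`
at the cost of `δ` in the radius, and by the data-processing inequality it does not increase total
variation, which gives the first inequality. The second one is inclusion of the feasible sets.
-/

open Set

section Selection

variable {Ω ι : Type*} [MeasurableSpace Ω]

lemma exists_measurable_forall_mem [MeasurableSpace ι] [Countable ι]
    {s : ι → Set Ω} (hs : ∀ i, MeasurableSet (s i)) (hcover : ∀ x, ∃ i, x ∈ s i) :
    ∃ f : Ω → ι, Measurable f ∧ ∀ x, x ∈ s (f x) := by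
  classical
  rcases isEmpty_or_nonempty ι with hι | hι
  · have hΩ : IsEmpty Ω := ⟨fun x => hι.elim (hcover x).choose⟩
    exact ⟨hΩ.elim, measurable_of_empty _, hΩ.elim⟩
  · obtain ⟨e, he⟩ := exists_surjective_nat ι
    have hmem : ∀ x, ∃ n, x ∈ s (e n) := fun x => by
      obtain ⟨i, hi⟩ := hcover x
      obtain ⟨n, rfl⟩ := he i
      exact ⟨n, hi⟩
    exact ⟨fun x => e (Nat.find (hmem x)),
      measurable_from_nat.comp (measurable_find hmem fun n => hs (e n)),
      fun x => Nat.find_spec (hmem x)⟩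

lemma exists_measurable_mem_abs_sub_le [Countable ι] {ψ : ι → Ω → ℝ}
    (hψ : ∀ k, Measurable (ψ k)) {S : Set Ω} (hS : S.Countable) {δ : ℝ}
    (hnet : ∀ x, ∃ y ∈ S, ∀ k, |ψ k y - ψ k x| ≤ δ) :
    ∃ T : Ω → Ω, Measurable T ∧ (∀ x, T x ∈ S) ∧ ∀ k x, |ψ k (T x) - ψ k x| ≤ δ := by
  have : Countable S := hS.to_subtype
  have hmeas (y : S) : MeasurableSet {x | ∀ k, |ψ k y - ψ k x| ≤ δ} := by
    simp only [ofPred_forall]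
    exact .iInter fun k => measurableSet_le ((hψ k).const_sub _).abs measurable_const
  have hcover (x : Ω) : ∃ y : S, ∀ k, |ψ k y - ψ k x| ≤ δ := by simpa using hnet x
  obtain ⟨f, hf, hclose⟩ := exists_measurable_forall_mem hmeas hcover
  exact ⟨fun x => f x, measurable_subtype_coe.comp hf, fun x => (f x).2, fun k x => hclose x k⟩

end Selection

section TotalVariation

variable {Ω Ω' : Type*} [MeasurableSpace Ω] [MeasurableSpace Ω']

lemma tv_nonneg (P Q : Measure Ω) : 0 ≤ tv P Q :=
  Real.iSup_nonneg fun _ => abs_nonneg _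

lemma abs_measure_sub_le_tv (P Q : Measure Ω) [IsFiniteMeasure P] [IsFiniteMeasure Q] {A : Set Ω}
    (hA : MeasurableSet A) : |(P A).toReal - (Q A).toReal| ≤ tv P Q := by
  have hbdd : BddAbove (range fun B : {B : Set Ω // MeasurableSet B} =>
      |(P B.1).toReal - (Q B.1).toReal|) := by
    refine ⟨max (P.real univ) (Q.real univ), ?_⟩
    rintro _ ⟨B, rfl⟩
    exact abs_sub_le_of_nonneg_of_le measureReal_nonneg
      ((measureReal_mono (subset_univ _)).trans (le_max_left _ _)) measureReal_nonneg
      ((measureReal_mono (subset_univ _)).trans (le_max_right _ _))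
  exact le_ciSup hbdd ⟨A, hA⟩

lemma tv_map_le (P Q : Measure Ω) [IsFiniteMeasure P] [IsFiniteMeasure Q] {T : Ω → Ω'}
    (hT : Measurable T) : tv (P.map T) (Q.map T) ≤ tv P Q := by
  have : Nonempty {A : Set Ω' // MeasurableSet A} := ⟨⟨∅, .empty⟩⟩
  refine ciSup_le fun ⟨A, hA⟩ => ?_
  simpa only [Measure.map_apply hT hA] using abs_measure_sub_le_tv P Q (hT hA)

/-- The largest affinity `1 - TV(P₀, P₁)` over `P₀ ∈ 𝒮₀` and `P₁ ∈ 𝒮₁`: the value of the robust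
testing problem with uncertainty sets `𝒮₀` and `𝒮₁`. As a real supremum it is `0` when one of the
sets is empty. -/
noncomputable def maxAffinity (𝒮₀ 𝒮₁ : Set (ProbabilityMeasure Ω)) : ℝ :=
  sSup {r : ℝ | ∃ P₀ ∈ 𝒮₀, ∃ P₁ ∈ 𝒮₁, r = 1 - tv (P₀ : Measure Ω) (P₁ : Measure Ω)}

lemma one_sub_tv_le_maxAffinity {𝒮₀ 𝒮₁ : Set (ProbabilityMeasure Ω)} {P₀ P₁ : ProbabilityMeasure Ω}
    (h₀ : P₀ ∈ 𝒮₀) (h₁ : P₁ ∈ 𝒮₁) :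
    1 - tv (P₀ : Measure Ω) (P₁ : Measure Ω) ≤ maxAffinity 𝒮₀ 𝒮₁ := by
  refine le_csSup ⟨1, ?_⟩ ⟨P₀, h₀, P₁, h₁, rfl⟩
  rintro _ ⟨P, -, Q, -, rfl⟩
  exact sub_le_self 1 (tv_nonneg _ _)

lemma maxAffinity_le {𝒮₀ 𝒮₁ : Set (ProbabilityMeasure Ω)} (hne₀ : 𝒮₀.Nonempty)
    (hne₁ : 𝒮₁.Nonempty) {a : ℝ}
    (h : ∀ P₀ ∈ 𝒮₀, ∀ P₁ ∈ 𝒮₁, 1 - tv (P₀ : Measure Ω) (P₁ : Measure Ω) ≤ a) :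
    maxAffinity 𝒮₀ 𝒮₁ ≤ a := by
  obtain ⟨P₀, h₀⟩ := hne₀
  obtain ⟨P₁, h₁⟩ := hne₁
  refine csSup_le ⟨_, P₀, h₀, P₁, h₁, rfl⟩ ?_
  rintro _ ⟨P, hP, Q, hQ, rfl⟩
  exact h P hP Q hQ

lemma maxAffinity_mono {𝒮₀ 𝒮₁ 𝒯₀ 𝒯₁ : Set (ProbabilityMeasure Ω)} (hne₀ : 𝒮₀.Nonempty)
    (hne₁ : 𝒮₁.Nonempty) (h₀ : 𝒮₀ ⊆ 𝒯₀) (h₁ : 𝒮₁ ⊆ 𝒯₁) :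
    maxAffinity 𝒮₀ 𝒮₁ ≤ maxAffinity 𝒯₀ 𝒯₁ :=
  maxAffinity_le hne₀ hne₁ fun _ hP _ hQ => one_sub_tv_le_maxAffinity (h₀ hP) (h₁ hQ)

lemma maxAffinity_le_of_mapsTo_map {𝒮₀ 𝒮₁ : Set (ProbabilityMeasure Ω)}
    {𝒯₀ 𝒯₁ : Set (ProbabilityMeasure Ω')} (hne₀ : 𝒮₀.Nonempty) (hne₁ : 𝒮₁.Nonempty)
    {T : Ω → Ω'} (hT : Measurable T) (h₀ : MapsTo (fun P => P.map hT.aemeasurable) 𝒮₀ 𝒯₀)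
    (h₁ : MapsTo (fun P => P.map hT.aemeasurable) 𝒮₁ 𝒯₁) :
    maxAffinity 𝒮₀ 𝒮₁ ≤ maxAffinity 𝒯₀ 𝒯₁ := by
  refine maxAffinity_le hne₀ hne₁ fun P hP Q hQ => ?_
  calc 1 - tv (P : Measure Ω) (Q : Measure Ω)
      ≤ 1 - tv ((P : Measure Ω).map T) ((Q : Measure Ω).map T) :=
        sub_le_sub_left (tv_map_le _ _ hT) 1
    _ ≤ maxAffinity 𝒯₀ 𝒯₁ := by
        simpa only [ProbabilityMeasure.toMeasure_map] using
          one_sub_tv_le_maxAffinity (h₀ hP) (h₁ hQ)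

end TotalVariation

lemma norm_integral_map_sub_integral_le {Ω E : Type*} [MeasurableSpace Ω] [NormedAddCommGroup E]
    [NormedSpace ℝ E] {μ : Measure Ω} [IsProbabilityMeasure μ] {T : Ω → Ω} (hT : AEMeasurable T μ)
    {f : Ω → E} (hf : Integrable f μ) (hfT : Integrable f (μ.map T)) {δ : ℝ}
    (hδ : ∀ᵐ x ∂μ, ‖f (T x) - f x‖ ≤ δ) : ‖∫ x, f x ∂μ.map T - ∫ x, f x ∂μ‖ ≤ δ := by
  calc ‖∫ x, f x ∂μ.map T - ∫ x, f x ∂μ‖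
      = ‖∫ x, (f (T x) - f x) ∂μ‖ := by
        rw [integral_map hT hfT.1]
        exact congrArg norm (integral_sub (hfT.comp_aemeasurable hT) hf).symm
    _ ≤ δ := by simpa using norm_integral_le_of_norm_le_const hδ

section MomentBall

variable {Ω ι : Type*} [MeasurableSpace Ω] {ψ : ι → Ω → ℝ} {Q : ProbabilityMeasure Ω}

/-- The moment-constrained uncertainty set of radius `θ` around `Q` on an arbitrary measurable
space; `momentSet` is the case of finitely many moment functions on a subset of `ℝ^d`. -/
def momentBall (ψ : ι → Ω → ℝ) (Q : ProbabilityMeasure Ω) (θ : ℝ) : Set (ProbabilityMeasure Ω) :=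
  {P | ∀ k, |∫ x, ψ k x ∂(P : Measure Ω) - ∫ x, ψ k x ∂(Q : Measure Ω)| ≤ θ}

/-- The members of `momentBall ψ Q θ` concentrated on `S`; `momentSetDiscrete` is the case
`S = Set.range z`. -/
def momentBallOn (S : Set Ω) (ψ : ι → Ω → ℝ) (Q : ProbabilityMeasure Ω) (θ : ℝ) :
    Set (ProbabilityMeasure Ω) :=
  {P | (P : Measure Ω) Sᶜ = 0 ∧ P ∈ momentBall ψ Q θ}

lemma self_mem_momentBall {θ : ℝ} (hθ : 0 ≤ θ) : Q ∈ momentBall ψ Q θ := fun k => by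
  simpa using hθ

lemma momentBallOn_subset_momentBall (S : Set Ω) (θ : ℝ) :
    momentBallOn S ψ Q θ ⊆ momentBall ψ Q θ := fun _ hP => hP.2

lemma mapsTo_map_momentBallOn {S : Set Ω} (hS : MeasurableSet S) (hψ : ∀ k, Measurable (ψ k))
    (hbdd : ∀ k, Bornology.IsBounded (range (ψ k))) {T : Ω → Ω} (hT : Measurable T)
    (hTS : ∀ x, T x ∈ S) {δ : ℝ} (hTψ : ∀ k x, |ψ k (T x) - ψ k x| ≤ δ) (η : ℝ) :
    MapsTo (fun P => P.map hT.aemeasurable) (momentBall ψ Q η) (momentBallOn S ψ Q (η + δ)) := by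
  have hint (k : ι) (P : ProbabilityMeasure Ω) : Integrable (ψ k) (P : Measure Ω) := by
    obtain ⟨C, hC⟩ := (hbdd k).exists_norm_le
    exact .of_bound (hψ k).aestronglyMeasurable C (.of_forall fun x => hC _ (mem_range_self x))
  refine fun P hP => ⟨?_, fun k => ?_⟩
  · have hpre : T ⁻¹' Sᶜ = ∅ := eq_empty_of_forall_notMem fun x hx => hx (hTS x)
    rw [ProbabilityMeasure.toMeasure_map, Measure.map_apply hT hS.compl, hpre, measure_empty]
  · have hshift := norm_integral_map_sub_integral_le hT.aemeasurable (hint k P)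
      (hint k (P.map hT.aemeasurable)) (.of_forall (hTψ k))
    rw [add_comm]
    exact (abs_sub_le _ _ _).trans (add_le_add hshift (hP k))

end MomentBall

theorem discretized_relaxation_sandwich_general {Ω ι : Type*} [MeasurableSpace Ω]
    [MeasurableSingletonClass Ω] [Countable ι] {ψ : ι → Ω → ℝ} (hψ : ∀ k, Measurable (ψ k))
    (hbdd : ∀ k, Bornology.IsBounded (range (ψ k))) (Q₀ Q₁ : ProbabilityMeasure Ω) {η δ : ℝ}
    (hη : 0 ≤ η) {S : Set Ω} (hS : S.Countable)
    (hnet : ∀ x, ∃ y ∈ S, ∀ k, |ψ k y - ψ k x| ≤ δ) :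
    maxAffinity (momentBall ψ Q₀ η) (momentBall ψ Q₁ η) ≤
        maxAffinity (momentBallOn S ψ Q₀ (η + δ)) (momentBallOn S ψ Q₁ (η + δ)) ∧
      maxAffinity (momentBallOn S ψ Q₀ (η + δ)) (momentBallOn S ψ Q₁ (η + δ)) ≤
        maxAffinity (momentBall ψ Q₀ (η + δ)) (momentBall ψ Q₁ (η + δ)) := by
  obtain ⟨T, hT, hTS, hTψ⟩ := exists_measurable_mem_abs_sub_le hψ hS hnet
  have hne (Q : ProbabilityMeasure Ω) : (momentBall ψ Q η).Nonempty := ⟨Q, self_mem_momentBall hη⟩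
  have hmaps (Q : ProbabilityMeasure Ω) : MapsTo (fun P => P.map hT.aemeasurable)
      (momentBall ψ Q η) (momentBallOn S ψ Q (η + δ)) :=
    mapsTo_map_momentBallOn hS.measurableSet hψ hbdd hT hTS hTψ η
  have hneOn (Q : ProbabilityMeasure Ω) : (momentBallOn S ψ Q (η + δ)).Nonempty :=
    ⟨_, hmaps Q (self_mem_momentBall hη)⟩
  exact ⟨maxAffinity_le_of_mapsTo_map (hne Q₀) (hne Q₁) hT (hmaps Q₀) (hmaps Q₁),
    maxAffinity_mono (hneOn Q₀) (hneOn Q₁) (momentBallOn_subset_momentBall S _)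
      (momentBallOn_subset_momentBall S _)⟩

/-- With `1`-Lipschitz moment functions and an `ε`-net
`S_N = {z_1,…,z_N}` of `X`, the discretized relaxed worst-case affinity is sandwiched
between the worst-case affinities at radii `η` and `η + ε`. -/
theorem discretized_relaxation_sandwich
    {d : ℕ} (X : Set (EuclideanSpace ℝ (Fin d))) (hX : IsCompact X)
    {K : ℕ} (ψ : Fin K → X → ℝ) (hψ : ∀ k, Continuous (ψ k))
    (hLip : ∀ k, ∀ x y : X, |ψ k x - ψ k y| ≤
      ‖(x : EuclideanSpace ℝ (Fin d)) - (y : EuclideanSpace ℝ (Fin d))‖)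
    (Q0 Q1 : ProbabilityMeasure X) (η ε : ℝ) (hη : 0 < η) (hε : 0 ≤ ε)
    {N : ℕ} (z : Fin N → X)
    (hnet : ∀ x : X, ∃ j, ‖(x : EuclideanSpace ℝ (Fin d)) - (z j : EuclideanSpace ℝ (Fin d))‖ ≤ ε) :
    sSup {r : ℝ | ∃ P0 ∈ momentSet X ψ Q0 η, ∃ P1 ∈ momentSet X ψ Q1 η,
        r = 1 - tv (P0 : Measure X) (P1 : Measure X)} ≤
      sSup {r : ℝ | ∃ P0 ∈ momentSetDiscrete X ψ Q0 (η + ε) z,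
        ∃ P1 ∈ momentSetDiscrete X ψ Q1 (η + ε) z,
        r = 1 - tv (P0 : Measure X) (P1 : Measure X)} ∧
    sSup {r : ℝ | ∃ P0 ∈ momentSetDiscrete X ψ Q0 (η + ε) z,
        ∃ P1 ∈ momentSetDiscrete X ψ Q1 (η + ε) z,
        r = 1 - tv (P0 : Measure X) (P1 : Measure X)} ≤
      sSup {r : ℝ | ∃ P0 ∈ momentSet X ψ Q0 (η + ε), ∃ P1 ∈ momentSet X ψ Q1 (η + ε),
        r = 1 - tv (P0 : Measure X) (P1 : Measure X)} := by
  have : CompactSpace X := isCompact_iff_compactSpace.mp hX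
  have hnetψ (x : X) : ∃ y ∈ range z, ∀ k, |ψ k y - ψ k x| ≤ ε :=
    let ⟨j, hj⟩ := hnet x
    ⟨z j, mem_range_self j, fun k => abs_sub_comm (ψ k x) _ ▸ (hLip k x (z j)).trans hj⟩
  exact discretized_relaxation_sandwich_general (fun k => (hψ k).measurable)
    (fun k => (isCompact_range (hψ k)).isBounded) Q0 Q1 hη.le (countable_range z) hnetψ
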